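/- arXiv:math/0304495 — 2 statements merged into one kernel-verified Lean document; each statement's English description precedes it below -/
import Mathlib

section
/- Let G be a finite group. There exists a family (m_U), indexed by the conjugacy classes of subgroups U ≤ G, where m_U is a polynomial with integer coefficients in the variables a_V indexed by the conjugacy classes of subgroups V ≤ G with U subconjugate to V, such that for every commutative ring R, every subgroup H ≤ G, and every x = (x_V)'_{V ≤ G} ∈ W_G(R): −φ_H(x) = φ_H((m_U(x_V | U ⪯ V ≤ G))'_{U ≤ G}). -/
open MulAction Pointwise
open scoped Classical

/-- The set of conjugacy classes of subgroups of `G`: the quotient of the set of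
subgroups of `G` by the conjugation action of `G`. -/
abbrev SubgroupConjClasses (G : Type*) [Group G] :=
  MulAction.orbitRel.Quotient (ConjAct G) (Subgroup G)

/-- `U` is subconjugate to `V`: `U ≤ gVg⁻¹` for some `g ∈ G`. -/
def Subconj {G : Type*} [Group G] (U V : Subgroup G) : Prop :=
  ∃ g : ConjAct G, U ≤ g • V

/-- The ghost map `φ_U : W_G(R) → R`,
`φ_U(x) = Σ'_{U ⪯ V ≤ G} |(G/V)^U| · x_V^{(V:U)}`, with exactly one summand for
each conjugacy class of subgroups `V` of `G` to which `U` is subconjugate. -/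
noncomputable def ghost {G : Type*} [Group G] [Fintype G] {R : Type*} [CommRing R]
    (U : Subgroup G) (x : SubgroupConjClasses G → R) : R :=
  ∑ᶠ C : SubgroupConjClasses G,
    if Subconj U (Quotient.out C) then
      (Nat.card (MulAction.fixedPoints U (G ⧸ (Quotient.out C : Subgroup G))) : R) *
        x C ^ (Nat.card (Quotient.out C : Subgroup G) / Nat.card U)
    else 0

/-!
The ghost vector `H ↦ φ_H(x)` is the sum over the classes `[V]` of the vectors
`ghostSingle V (x_V) = (|(G/V)^H| · x_V^{(V:H)})_H`, so it suffices to show that ghost vectors are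
closed under negation. For the trivial coset space, `(∑ i, v i)^{(G:H)}` is the total weight of the
`H`-invariant colorings of `G`; splitting the `G`-set of all colorings into orbits writes
`ghostSingle ⊤ (∑ i, v i)` as a sum of vectors `ghostSingle K b`, one for each orbit of colorings
with stabilizer `K`. The constant colorings contribute `∑ i, ghostSingle ⊤ (v i)`, and for every
other orbit `K` is a proper subgroup. Applied to the group `V` and induced up to `G`, this shows
that `ghostSingle V` is additive modulo vectors `ghostSingle W b` with `|W| < |V|`. By induction on
`|V|`, translation by `ghostSingle V a` therefore preserves the set of ghost vectors. The vectors
whose translations preserve it form a group, which thus contains `-φ(x)`; translating `0` by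
`-φ(x)` exhibits it as a ghost vector.

The variables of the polynomials are tracked by requiring the coordinate at `[V]` to lie in a
subring `S V`, with `S V ≤ S U` whenever `U` is subconjugate to `V`.
-/

section GhostSingle

variable {G A : Type*} [Group G] [CommRing A]

theorem mem_fixedPoints_iff_le_stabilizer {Y : Type*} [MulAction G Y] (H : Subgroup G) (y : Y) :
    y ∈ fixedPoints H Y ↔ H ≤ stabilizer G y :=
  ⟨fun h g hg => h ⟨g, hg⟩, fun h g => h g.2⟩

theorem mem_stabilizer_mk_iff (V : Subgroup G) (g h : G) :
    h ∈ stabilizer G (g : G ⧸ V) ↔ g⁻¹ * h * g ∈ V := by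
  rw [mem_stabilizer_iff, eq_comm, MulAction.Quotient.smul_coe, QuotientGroup.eq, smul_eq_mul,
    mul_assoc]

theorem subconj_iff_exists_le_stabilizer (H V : Subgroup G) :
    Subconj H V ↔ ∃ q : G ⧸ V, H ≤ stabilizer G q := by
  rw [Subconj, (QuotientGroup.mk_surjective (s := V)).exists,
    ConjAct.toConjAct.surjective.exists]
  refine exists_congr fun g => forall₂_congr fun h _ => ?_
  rw [mem_stabilizer_mk_iff, Subgroup.mem_pointwise_smul_iff_inv_smul_mem,
    ← ConjAct.toConjAct_inv, ConjAct.toConjAct_smul, inv_inv]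

theorem card_conj_smul (g : ConjAct G) (V : Subgroup G) : Nat.card ↥(g • V) = Nat.card V :=
  (Nat.card_congr (Subgroup.equivSMul g V).toEquiv).symm

theorem Subconj.refl (U : Subgroup G) : Subconj U U := ⟨1, (one_smul _ U).ge⟩

theorem Subconj.trans {U V W : Subgroup G} (hUV : Subconj U V) (hVW : Subconj V W) :
    Subconj U W := by
  obtain ⟨g, hg⟩ := hUV
  obtain ⟨k, hk⟩ := hVW
  exact ⟨g * k, hg.trans (by
    rw [mul_smul]; exact Subgroup.pointwise_smul_le_pointwise_smul_iff.2 hk)⟩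

theorem exists_conj_smul_eq_out (V : Subgroup G) :
    ∃ g : ConjAct G, g • V = Quotient.out (Quotient.mk _ V : SubgroupConjClasses G) :=
  orbitRel_apply.1 (Quotient.mk_out (s := orbitRel _ _) V)

/-- The family of ghost components `H ↦ φ_H(x)` of the Witt vector `x` whose only nonzero
coordinate is `a`, at the conjugacy class of `V`. -/
noncomputable def ghostSingle (V : Subgroup G) (a : A) (H : Subgroup G) : A :=
  Nat.card (fixedPoints H (G ⧸ V)) * a ^ (Nat.card V / Nat.card H)

theorem ghostSingle_eq_zero_of_not_subconj {H V : Subgroup G} (h : ¬ Subconj H V) (a : A) :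
    ghostSingle V a H = 0 := by
  have : IsEmpty (fixedPoints H (G ⧸ V)) := Set.isEmpty_coe_sort.2 <|
    Set.eq_empty_of_forall_notMem fun q hq => h <|
      (subconj_iff_exists_le_stabilizer H V).2 ⟨q, (mem_fixedPoints_iff_le_stabilizer H q).1 hq⟩
  rw [ghostSingle, Nat.card_of_isEmpty, Nat.cast_zero, zero_mul]

theorem ghostSingle_eq_sum (V : Subgroup G) [Fintype (G ⧸ V)] (a : A) (H : Subgroup G) :
    ghostSingle V a H =
      ∑ q : G ⧸ V, if H ≤ stabilizer G q then a ^ (Nat.card V / Nat.card H) else 0 := by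
  have hcard : Nat.card (fixedPoints H (G ⧸ V)) =
      (Finset.univ.filter fun q : G ⧸ V => H ≤ stabilizer G q).card :=
    Nat.subtype_card _ fun q => by
      exact (Finset.mem_filter_univ q).trans (mem_fixedPoints_iff_le_stabilizer H q).symm
  rw [ghostSingle, hcard, ← Finset.sum_filter, Finset.sum_const, nsmul_eq_mul]

variable [Finite G]

theorem ghostSingle_top (a : A) (H : Subgroup G) :
    ghostSingle (⊤ : Subgroup G) a H = a ^ Nat.card (G ⧸ H) := by
  have := QuotientGroup.subsingleton_quotient_top (G := G)
  have := Fintype.ofFinite (G ⧸ (⊤ : Subgroup G))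
  have hfixed : ∀ q : G ⧸ (⊤ : Subgroup G), H ≤ stabilizer G q := fun q _ _ =>
    Subsingleton.elim _ _
  rw [ghostSingle_eq_sum, Fintype.sum_subsingleton _ ((1 : G) : G ⧸ (⊤ : Subgroup G)),
    if_pos (hfixed _), Subgroup.card_top, Subgroup.card_eq_card_quotient_mul_card_subgroup H,
    Nat.mul_div_cancel _ Nat.card_pos]

theorem Subconj.card_le {H V : Subgroup G} (h : Subconj H V) : Nat.card H ≤ Nat.card V := by
  obtain ⟨g, hg⟩ := h
  exact (Subgroup.card_le_of_le hg).trans_eq (card_conj_smul g V)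

theorem ghostSingle_zero (V : Subgroup G) : ghostSingle V (0 : A) = 0 := by
  funext H
  by_cases h : Subconj H V
  · rw [ghostSingle, zero_pow (Nat.div_pos h.card_le Nat.card_pos).ne', mul_zero, Pi.zero_apply]
  · exact ghostSingle_eq_zero_of_not_subconj h 0

theorem ghostSingle_conj_smul (g : ConjAct G) (V : Subgroup G) (a : A) :
    ghostSingle (g • V) a = ghostSingle V a := by
  have := Fintype.ofFinite G
  funext H
  let e : G ⧸ V ≃ G ⧸ (g • V) :=
    Quotient.congr (Equiv.mulRight (ConjAct.ofConjAct g)⁻¹) fun s t => by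
      rw [QuotientGroup.leftRel_apply, QuotientGroup.leftRel_apply,
        Subgroup.mem_pointwise_smul_iff_inv_smul_mem]
      simp [ConjAct.smul_def, mul_assoc]
  rw [ghostSingle_eq_sum, ghostSingle_eq_sum, card_conj_smul, ← e.sum_comp]
  refine Finset.sum_congr rfl fun q _ => if_congr (forall₂_congr fun h _ => ?_) rfl rfl
  induction q using QuotientGroup.induction_on with
  | H t =>
  have he : e (t : G ⧸ V) = ((t * (ConjAct.ofConjAct g)⁻¹ : G) : G ⧸ (g • V)) := rfl
  rw [he, mem_stabilizer_mk_iff, mem_stabilizer_mk_iff,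
    Subgroup.mem_pointwise_smul_iff_inv_smul_mem]
  simp [ConjAct.smul_def, mul_assoc]

end GhostSingle

section WeightedSets

variable {G A Y : Type*} [Group G] [MulAction G Y]

theorem stabilizer_mk_stabilizer (g : G) (y : Y) :
    stabilizer G (g : G ⧸ stabilizer G y) = stabilizer G (g • y) := by
  ext h
  rw [mem_stabilizer_mk_iff, mem_stabilizer_iff, mem_stabilizer_iff, mul_smul, mul_smul,
    inv_smul_eq_iff]

theorem card_stabilizer_smul (g : G) (y : Y) :
    Nat.card (stabilizer G (g • y)) = Nat.card (stabilizer G y) := by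
  rw [stabilizer_smul_eq_stabilizer_map_conj]
  exact Subgroup.card_map_of_injective (MulAut.conj g).injective

theorem sum_fixed_eq_sum_orbits_ghostSingle [Finite G] [Fintype Y] [CommRing A]
    (w : Y → A) (hw : ∀ (g : G) (y : Y), w (g • y) = w y) (H : Subgroup G) :
    (∑ y : Y, if H ≤ stabilizer G y then
        w y ^ (Nat.card (stabilizer G y) / Nat.card H) else 0) =
      ∑ o : orbitRel.Quotient G Y, ghostSingle (stabilizer G o.out) (w o.out) H := by
  have := Fintype.ofFinite G
  rw [← (selfEquivSigmaOrbitsQuotientStabilizer G Y).symm.sum_comp, Fintype.sum_sigma]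
  refine Finset.sum_congr rfl fun o _ => ?_
  rw [ghostSingle_eq_sum]
  refine Finset.sum_congr rfl fun q _ => ?_
  induction q using QuotientGroup.induction_on with
  | H g =>
  have hsymm : (selfEquivSigmaOrbitsQuotientStabilizer G Y).symm ⟨o, (g : G ⧸ _)⟩ = g • o.out :=
    rfl
  rw [hsymm, stabilizer_mk_stabilizer, card_stabilizer_smul, hw]

end WeightedSets

section Colorings

attribute [local instance] arrowAction

variable {G I : Type*} [Group G]

theorem le_stabilizer_coloring_iff {H : Subgroup G} {F : G → I} :
    H ≤ stabilizer G F ↔ ∀ h ∈ H, ∀ t, F (h * t) = F t := by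
  refine ⟨fun hF h hh t => ?_, fun hF h hh => funext fun t => hF _ (H.inv_mem hh) t⟩
  have hsmul : F (h⁻¹⁻¹ * t) = F t := congrFun (hF (H.inv_mem hh)) t
  rwa [inv_inv] at hsmul

/-- Colorings of `G` invariant under left translation by `H` are colorings of `G ⧸ H`; the
inversion turns the orbits `Ht` into left cosets. -/
noncomputable def invariantColoringEquiv (H : Subgroup G) (I : Type*) :
    {F : G → I // H ≤ stabilizer G F} ≃ (G ⧸ H → I) where
  toFun F q := F.1 q.out⁻¹
  invFun f := ⟨fun t => f (t⁻¹ : G), le_stabilizer_coloring_iff.2 fun h hh t =>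
    congrArg f <| QuotientGroup.eq.2 <| by simpa using hh⟩
  left_inv F := Subtype.ext <| funext fun t => by
    obtain ⟨h, hh⟩ := QuotientGroup.mk_out_eq_mul H t⁻¹
    simpa [hh] using le_stabilizer_coloring_iff.1 F.2 _ (H.inv_mem h.2) t
  right_inv f := funext fun q => by simp

theorem card_colorClass_invariantColoringEquiv_symm (H : Subgroup G) (f : G ⧸ H → I) (i : I) :
    Nat.card (((invariantColoringEquiv H I).symm f).1 ⁻¹' {i}) =
      Nat.card H * Nat.card (f ⁻¹' {i}) := by
  rw [← Nat.card_prod, ← Nat.card_congr (QuotientGroup.preimageMkEquivSubgroupProdSet H _)]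
  exact Nat.card_congr ((Equiv.inv G).subtypeEquiv fun t => Iff.rfl)

theorem card_dvd_card_colorClass {H : Subgroup G} {F : G → I} (hF : H ≤ stabilizer G F) (i : I) :
    Nat.card H ∣ Nat.card (F ⁻¹' {i}) := by
  have hcard := card_colorClass_invariantColoringEquiv_symm H
    (invariantColoringEquiv H I ⟨F, hF⟩) i
  rw [Equiv.symm_apply_apply] at hcard
  exact ⟨_, hcard⟩

theorem stabilizer_coloring_eq_top_iff {F : G → I} :
    stabilizer G F = ⊤ ↔ ∃ i, F = Function.const G i := by
  rw [← top_le_iff, le_stabilizer_coloring_iff]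
  constructor
  · exact fun hF => ⟨F 1, funext fun t => by simpa using hF t trivial 1⟩
  · rintro ⟨i, rfl⟩ _ _ _
    rfl

variable {A : Type*} [CommRing A] [Fintype I]

/-- The weight of a coloring `F` of `G` when color `i` has weight `v i`: each orbit of the
stabilizer of `F` on `G` counts once. -/
noncomputable def coloringWeight (v : I → A) (F : G → I) : A :=
  ∏ i, v i ^ (Nat.card (F ⁻¹' {i}) / Nat.card (stabilizer G F))

theorem coloringWeight_smul (v : I → A) (g : G) (F : G → I) :
    coloringWeight v (g • F) = coloringWeight v F := by
  refine Finset.prod_congr rfl fun i _ => ?_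
  have hclass : Nat.card ((g • F) ⁻¹' {i}) = Nat.card (F ⁻¹' {i}) :=
    Nat.card_congr ((Equiv.mulLeft g⁻¹).subtypeEquiv fun t => Iff.rfl)
  rw [card_stabilizer_smul, hclass]

theorem coloringWeight_mem {S : Subring A} {v : I → A} (hv : ∀ i, v i ∈ S) (F : G → I) :
    coloringWeight v F ∈ S :=
  S.prod_mem fun i _ => S.pow_mem (hv i) _

theorem coloringWeight_pow (v : I → A) {H : Subgroup G} {F : G → I} (hF : H ≤ stabilizer G F) :
    coloringWeight v F ^ (Nat.card (stabilizer G F) / Nat.card H) =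
      ∏ i, v i ^ (Nat.card (F ⁻¹' {i}) / Nat.card H) := by
  rw [coloringWeight, ← Finset.prod_pow]
  refine Finset.prod_congr rfl fun i _ => ?_
  rw [← pow_mul, Nat.div_mul_div (card_dvd_card_colorClass le_rfl i)
    (Subgroup.card_dvd_of_le hF)]

theorem coloringWeight_const [Finite G] (v : I → A) (i : I) :
    coloringWeight v (Function.const G i) = v i := by
  have hstab : stabilizer G (Function.const G i) = ⊤ := stabilizer_coloring_eq_top_iff.2 ⟨i, rfl⟩
  rw [coloringWeight, hstab, Finset.prod_eq_single i _ (fun h => absurd (Finset.mem_univ i) h)]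
  · have hfull : Function.const G i ⁻¹' {i} = Set.univ := Set.preimage_const_of_mem rfl
    rw [hfull, Nat.card_congr (Equiv.Set.univ G), Subgroup.card_top, Nat.div_self Nat.card_pos,
      pow_one]
  · intro j _ hj
    have hempty : Function.const G i ⁻¹' {j} = ∅ :=
      Set.preimage_const_of_notMem fun h => hj h.symm
    simp [hempty]

variable [Fintype G]

theorem sum_pow_card_quotient (v : I → A) (H : Subgroup G) :
    (∑ i, v i) ^ Nat.card (G ⧸ H) =
      ∑ F : G → I, if H ≤ stabilizer G F then
        coloringWeight v F ^ (Nat.card (stabilizer G F) / Nat.card H) else 0 := by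
  have hweight : ∀ f : G ⧸ H → I, ∏ q, v (f q) =
      ∏ i, v i ^ (Nat.card (((invariantColoringEquiv H I).symm f).1 ⁻¹' {i}) / Nat.card H) := by
    intro f
    rw [← Finset.prod_fiberwise_of_maps_to (g := f) (t := Finset.univ)
      (fun _ _ => Finset.mem_univ _)]
    refine Finset.prod_congr rfl fun i _ => ?_
    rw [card_colorClass_invariantColoringEquiv_symm, Nat.mul_div_cancel_left _ Nat.card_pos,
      Finset.prod_congr rfl fun q hq => by rw [(Finset.mem_filter.1 hq).2],
      Finset.prod_const]
    congr 1
    exact (Nat.subtype_card _ fun q => by simp).symm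
  calc (∑ i, v i) ^ Nat.card (G ⧸ H)
      = ∏ _q : G ⧸ H, ∑ i, v i := by
        rw [Finset.prod_const, Finset.card_univ, Nat.card_eq_fintype_card]
    _ = ∑ f : G ⧸ H → I, ∏ q, v (f q) := by
        rw [Finset.prod_univ_sum, Fintype.piFinset_univ]
    _ = ∑ F : {F : G → I // H ≤ stabilizer G F},
          coloringWeight v F.1 ^ (Nat.card (stabilizer G F.1) / Nat.card H) := by
        rw [← (invariantColoringEquiv H I).symm.sum_comp]
        exact Finset.sum_congr rfl fun f _ => by
          rw [hweight, coloringWeight_pow v ((invariantColoringEquiv H I).symm f).2]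
    _ = _ := by
        rw [← Finset.sum_filter]
        exact (Finset.sum_subtype _ (fun F => Finset.mem_filter_univ F)
          fun F => coloringWeight v F ^ (Nat.card (stabilizer G F) / Nat.card H)).symm

theorem ghostSingle_top_sum (v : I → A) :
    ghostSingle (⊤ : Subgroup G) (∑ i, v i) =
      ∑ o : orbitRel.Quotient G (G → I),
        ghostSingle (stabilizer G o.out) (coloringWeight v o.out) := by
  funext H
  rw [ghostSingle_top, sum_pow_card_quotient, Finset.sum_apply,
    sum_fixed_eq_sum_orbits_ghostSingle _ (coloringWeight_smul v)]

theorem sum_orbits_stabilizer_eq_top (v : I → A) :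
    ∑ o : orbitRel.Quotient G (G → I) with stabilizer G o.out = ⊤,
        ghostSingle (stabilizer G o.out) (coloringWeight v o.out) =
      ∑ i, ghostSingle (⊤ : Subgroup G) (v i) := by
  have hout : ∀ i, (Quotient.mk _ (Function.const G i) : orbitRel.Quotient G (G → I)).out =
      Function.const G i := fun i => by
    obtain ⟨g, hg⟩ := orbitRel_apply.1
      (Quotient.mk_out (s := orbitRel G (G → I)) (Function.const G i))
    exact hg.symm
  symm
  refine Finset.sum_bij (fun i _ => Quotient.mk _ (Function.const G i)) (fun i _ => ?_)
    (fun i _ j _ hij => ?_) (fun o ho => ?_) (fun i _ => ?_)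
  · rw [Finset.mem_filter_univ, hout, stabilizer_coloring_eq_top_iff]
    exact ⟨i, rfl⟩
  · exact Function.const_injective <|
      (hout i).symm.trans <| (congrArg Quotient.out hij).trans (hout j)
  · obtain ⟨i, hi⟩ := stabilizer_coloring_eq_top_iff.1 ((Finset.mem_filter_univ o).1 ho)
    exact ⟨i, Finset.mem_univ i, by rw [← hi]; exact Quotient.out_eq o⟩
  · rw [hout, coloringWeight_const, stabilizer_coloring_eq_top_iff.2 ⟨i, rfl⟩]

end Colorings

section Induction

variable {G A : Type*} [Group G] [CommRing A]

theorem card_comap_conj_subtype {V H : Subgroup G} {g : G} (hg : H ≤ stabilizer G (g : G ⧸ V)) :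
    Nat.card (H.comap ((MulAut.conj g).toMonoidHom.comp V.subtype)) = Nat.card H :=
  Nat.card_preimage_of_injective ((MulAut.conj g).injective.comp V.subtype_injective) fun h hh =>
    ⟨⟨g⁻¹ * h * g, (mem_stabilizer_mk_iff V g h).1 (hg hh)⟩, by simp [mul_assoc]⟩

theorem le_stabilizer_mk_iff_of_le {K V : Subgroup G} (hKV : K ≤ V) (H : Subgroup G) {g r : G}
    (hrg : r⁻¹ * g ∈ V) :
    H ≤ stabilizer G (g : G ⧸ K) ↔ H ≤ stabilizer G (r : G ⧸ V) ∧
      H.comap ((MulAut.conj r).toMonoidHom.comp V.subtype) ≤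
        stabilizer V ((⟨r⁻¹ * g, hrg⟩ : V) : V ⧸ K.subgroupOf V) := by
  have hcoset : (r : G ⧸ V) = (g : G ⧸ V) := QuotientGroup.eq.2 hrg
  constructor
  · refine fun hg => ⟨fun h hh => ?_, fun v hv => ?_⟩
    · rw [hcoset, mem_stabilizer_mk_iff]
      exact hKV ((mem_stabilizer_mk_iff K g h).1 (hg hh))
    · have hmem := (mem_stabilizer_mk_iff K g _).1 (hg hv)
      rw [mem_stabilizer_mk_iff, Subgroup.mem_subgroupOf]
      simpa [mul_assoc] using hmem
  · rintro ⟨hr, hstab⟩ h hh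
    have hmem := (mem_stabilizer_mk_iff _ _ _).1 <| hstab
      (x := ⟨r⁻¹ * h * r, (mem_stabilizer_mk_iff V r h).1 (hr hh)⟩) (by simpa [mul_assoc] using hh)
    rw [mem_stabilizer_mk_iff]
    simpa [Subgroup.mem_subgroupOf, mul_assoc] using hmem

variable [Fintype G]

/-- Induction of ghost vectors from `V` to `G`, modelled on the fixed points
`(G ×_V Y)^H = ∐_{gV ∈ (G/V)^H} Y^(g⁻¹Hg)` of an induced `V`-set `Y`. -/
noncomputable def induceGhost (V : Subgroup G) : (Subgroup V → A) →+ (Subgroup G → A) where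
  toFun f H := ∑ s : G ⧸ V, if H ≤ stabilizer G s then
    f (H.comap ((MulAut.conj s.out).toMonoidHom.comp V.subtype)) else 0
  map_zero' := funext fun H => by simp
  map_add' f f' := funext fun H => by
    simp only [Pi.add_apply, ← Finset.sum_add_distrib, ite_add_ite, add_zero]

theorem induceGhost_ghostSingle_subgroupOf {K V : Subgroup G} (hKV : K ≤ V) (a : A) :
    induceGhost V (ghostSingle (K.subgroupOf V) a) = ghostSingle K a := by
  funext H
  have hcardK : Nat.card (K.subgroupOf V) = Nat.card K :=
    Nat.card_congr (Subgroup.subgroupOfEquivOfLe hKV).toEquiv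
  rw [ghostSingle_eq_sum, ← (Subgroup.quotientEquivProdOfLE hKV).symm.sum_comp,
    Fintype.sum_prod_type]
  refine Finset.sum_congr rfl fun s _ => ?_
  have hterm : ∀ q : V ⧸ K.subgroupOf V,
      (H ≤ stabilizer G ((Subgroup.quotientEquivProdOfLE hKV).symm (s, q)) ↔
        H ≤ stabilizer G s ∧
          H.comap ((MulAut.conj s.out).toMonoidHom.comp V.subtype) ≤ stabilizer V q) := by
    intro q
    induction q using QuotientGroup.induction_on with
    | H v =>
    have hmem : s.out⁻¹ * (s.out * (v : G)) ∈ V := by simp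
    have hsymm : (Subgroup.quotientEquivProdOfLE hKV).symm (s, (v : V ⧸ K.subgroupOf V)) =
        ((s.out * (v : G) : G) : G ⧸ K) := rfl
    rw [hsymm]
    simpa only [inv_mul_cancel_left, QuotientGroup.out_eq'] using
      le_stabilizer_mk_iff_of_le hKV H hmem
  simp only [hterm, ite_and]
  split_ifs with hs
  · rw [ghostSingle_eq_sum, hcardK,
      card_comap_conj_subtype (by rwa [QuotientGroup.out_eq'])]
  · rw [Finset.sum_const_zero]

theorem induceGhost_ghostSingle {V : Subgroup G} (K : Subgroup V) (a : A) :
    induceGhost V (ghostSingle K a) = ghostSingle (K.map V.subtype) a := by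
  rw [← induceGhost_ghostSingle_subgroupOf (Subgroup.map_subtype_le K), Subgroup.subgroupOf,
    Subgroup.comap_map_eq_self_of_injective V.subtype_injective]

end Induction

section Additivity

variable {G A I : Type*} [Group G] [Finite G] [CommRing A] [Fintype I]

attribute [local instance] arrowAction in
theorem ghostSingle_sum_sub_sum_mem {S : Subgroup G → Subring A}
    (hS : ∀ ⦃U V⦄, Subconj U V → S V ≤ S U) {T : AddSubgroup (Subgroup G → A)} {V : Subgroup G}
    (hT : ∀ W : Subgroup G, Nat.card W < Nat.card V → ∀ b ∈ S W, ghostSingle W b ∈ T)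
    {v : I → A} (hv : ∀ i, v i ∈ S V) :
    ghostSingle V (∑ i, v i) - ∑ i, ghostSingle V (v i) ∈ T := by
  have := Fintype.ofFinite G
  have htop : ∀ a : A, ghostSingle V a = induceGhost V (ghostSingle ⊤ a) := fun a => by
    rw [induceGhost_ghostSingle, ← MonoidHom.range_eq_map, Subgroup.range_subtype]
  simp only [htop]
  rw [← map_sum, ← map_sub, ghostSingle_top_sum, ← sum_orbits_stabilizer_eq_top,
    ← Finset.sum_filter_add_sum_filter_not _ fun o : orbitRel.Quotient V (V → I) =>
      stabilizer V o.out = ⊤, add_sub_cancel_left, map_sum]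
  refine T.sum_mem fun o ho => ?_
  rw [induceGhost_ghostSingle]
  refine hT _ ?_ _ (coloringWeight_mem (fun i => hS ?_ (hv i)) _)
  · rw [Subgroup.card_map_of_injective V.subtype_injective]
    exact lt_of_le_of_ne (Subgroup.card_le_card_group _) fun h =>
      (Finset.mem_filter.1 ho).2 (Subgroup.eq_top_of_card_eq _ h)
  · exact ⟨1, by rw [one_smul]; exact Subgroup.map_subtype_le _⟩

theorem ghostSingle_add_sub_mem {S : Subgroup G → Subring A}
    (hS : ∀ ⦃U V⦄, Subconj U V → S V ≤ S U) {T : AddSubgroup (Subgroup G → A)} {V : Subgroup G}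
    (hT : ∀ W : Subgroup G, Nat.card W < Nat.card V → ∀ b ∈ S W, ghostSingle W b ∈ T)
    {a b : A} (ha : a ∈ S V) (hb : b ∈ S V) :
    ghostSingle V (a + b) - (ghostSingle V a + ghostSingle V b) ∈ T := by
  simpa using ghostSingle_sum_sub_sum_mem hS hT (v := fun c : Bool => cond c a b)
    (Bool.forall_bool.2 ⟨hb, ha⟩)

end Additivity

section GhostVectors

variable {G A : Type*} [Group G] [Fintype G] [CommRing A]

theorem ghost_eq_sum_ghostSingle (x : SubgroupConjClasses G → A) :
    (fun H => ghost H x) = ∑ C, ghostSingle (Quotient.out C) (x C) := by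
  funext H
  rw [ghost, finsum_eq_sum_of_fintype, Finset.sum_apply]
  refine Finset.sum_congr rfl fun C _ => ?_
  split_ifs with h
  · rfl
  · exact (ghostSingle_eq_zero_of_not_subconj h _).symm

theorem map_ghost {B : Type*} [CommRing B] (f : A →+* B) (H : Subgroup G)
    (x : SubgroupConjClasses G → A) : f (ghost H x) = ghost H (f ∘ x) := by
  rw [ghost, ghost, finsum_eq_sum_of_fintype, finsum_eq_sum_of_fintype]
  simp only [map_sum, apply_ite f, map_mul, map_pow, map_natCast, map_zero, Function.comp_apply]

/-- The ghost vectors `H ↦ φ_H(x)` of the Witt vectors `x` whose coordinate at each class `[V]`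
lies in `S V`. -/
def ghostVectors (S : Subgroup G → Subring A) : Set (Subgroup G → A) :=
  {f | ∃ x : SubgroupConjClasses G → A, (∀ C, x C ∈ S (Quotient.out C)) ∧
    (fun H => ghost H x) = f}

theorem exists_replace_coordinate_mem_ghostVectors {S : Subgroup G → Subring A} {f : Subgroup G → A}
    (hf : f ∈ ghostVectors S) (C : SubgroupConjClasses G) :
    ∃ c ∈ S (Quotient.out C), ∀ d ∈ S (Quotient.out C),
      f - ghostSingle (Quotient.out C) c + ghostSingle (Quotient.out C) d ∈ ghostVectors S := by
  obtain ⟨x, hx, rfl⟩ := hf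
  refine ⟨x C, hx C, fun d hd => ⟨Function.update x C d, fun D => ?_, ?_⟩⟩
  · obtain rfl | hD := eq_or_ne D C
    · rwa [Function.update_self]
    · rw [Function.update_of_ne hD]
      exact hx D
  · rw [ghost_eq_sum_ghostSingle, ghost_eq_sum_ghostSingle,
      ← Finset.add_sum_erase _ _ (Finset.mem_univ C),
      ← Finset.add_sum_erase _ _ (Finset.mem_univ C), Function.update_self,
      Finset.sum_congr rfl fun D hD => by rw [Function.update_of_ne (Finset.ne_of_mem_erase hD)]]
    abel

theorem ghostSingle_out_mem_stabilizer_ghostVectors {S : Subgroup G → Subring A}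
    (hS : ∀ ⦃U V⦄, Subconj U V → S V ≤ S U) (C : SubgroupConjClasses G)
    (hlower : ∀ W : Subgroup G, Nat.card W < Nat.card (Quotient.out C : Subgroup G) →
      ∀ b ∈ S W, ghostSingle W b ∈ AddAction.stabilizer (Subgroup G → A) (ghostVectors S))
    {a : A} (ha : a ∈ S (Quotient.out C)) :
    ghostSingle (Quotient.out C) a ∈ AddAction.stabilizer (Subgroup G → A) (ghostVectors S) := by
  refine AddAction.mem_stabilizer_set.2 fun f => ⟨fun hf => ?_, fun hf => ?_⟩
  · obtain ⟨c, hc, hreplace⟩ := exists_replace_coordinate_mem_ghostVectors hf C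
    have hcorr := ghostSingle_add_sub_mem hS hlower (sub_mem hc ha) ha
    convert (AddAction.mem_stabilizer_set.1 hcorr _).2 (hreplace _ (sub_mem hc ha)) using 1
    simp only [vadd_eq_add, sub_add_cancel]
    abel
  · obtain ⟨c, hc, hreplace⟩ := exists_replace_coordinate_mem_ghostVectors hf C
    have hcorr := neg_mem (ghostSingle_add_sub_mem hS hlower hc ha)
    convert (AddAction.mem_stabilizer_set.1 hcorr _).2 (hreplace _ (add_mem hc ha)) using 1
    simp only [vadd_eq_add]
    abel

theorem ghostSingle_mem_stabilizer_ghostVectors {S : Subgroup G → Subring A}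
    (hS : ∀ ⦃U V⦄, Subconj U V → S V ≤ S U) (V : Subgroup G) {a : A} (ha : a ∈ S V) :
    ghostSingle V a ∈ AddAction.stabilizer (Subgroup G → A) (ghostVectors S) := by
  induction hn : Nat.card V using Nat.strong_induction_on generalizing V a with
  | h n ih =>
  subst hn
  obtain ⟨g, hg⟩ := exists_conj_smul_eq_out V
  rw [← ghostSingle_conj_smul g, hg]
  refine ghostSingle_out_mem_stabilizer_ghostVectors hS _ (fun W hW b hb => ?_) ?_
  · rw [← hg, card_conj_smul] at hW
    exact ih _ hW W hb rfl
  · rw [← hg]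
    exact hS ⟨g, le_rfl⟩ ha

theorem exists_ghost_eq_neg {S : Subgroup G → Subring A}
    (hS : ∀ ⦃U V⦄, Subconj U V → S V ≤ S U) {x : SubgroupConjClasses G → A}
    (hx : ∀ C, x C ∈ S (Quotient.out C)) :
    ∃ y : SubgroupConjClasses G → A, (∀ C, y C ∈ S (Quotient.out C)) ∧
      ∀ H, ghost H y = -ghost H x := by
  have hzero : (0 : Subgroup G → A) ∈ ghostVectors S :=
    ⟨0, fun C => (S _).zero_mem, by
      rw [ghost_eq_sum_ghostSingle]
      exact Finset.sum_eq_zero fun C _ => ghostSingle_zero _⟩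
  have hstab : (fun H => ghost H x) ∈ AddAction.stabilizer (Subgroup G → A) (ghostVectors S) := by
    rw [ghost_eq_sum_ghostSingle]
    exact AddSubgroup.sum_mem _ fun C _ => ghostSingle_mem_stabilizer_ghostVectors hS _ (hx C)
  obtain ⟨y, hy, hyx⟩ := (AddAction.mem_stabilizer_set.1 (neg_mem hstab) 0).2 hzero
  refine ⟨y, hy, fun H => ?_⟩
  simpa using congrFun hyx H

end GhostVectors

theorem exists_ghost_eq_neg_ghost_X (G : Type*) [Group G] [Fintype G] :
    ∃ y : SubgroupConjClasses G → MvPolynomial (SubgroupConjClasses G) ℤ,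
      (∀ C, y C ∈ MvPolynomial.supported ℤ
        {D : SubgroupConjClasses G | Subconj (Quotient.out C) (Quotient.out D)}) ∧
      ∀ H : Subgroup G, ghost H y = -ghost H MvPolynomial.X :=
  exists_ghost_eq_neg
    (S := fun U => (MvPolynomial.supported ℤ
      {D : SubgroupConjClasses G | Subconj U (Quotient.out D)}).toSubring)
    (fun _ _ hUV => MvPolynomial.supported_mono fun _ hD => hUV.trans hD)
    (fun C => MvPolynomial.X_mem_supported.2 (Subconj.refl (Quotient.out C)))

/-- **Existence of the negation Witt polynomials.**  There is a family `m_U`, indexed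
by the conjugacy classes of subgroups `U ≤ G`, of integral polynomials in variables
`a_V` indexed by the conjugacy classes of subgroups `V ≤ G` to which `U` is
subconjugate, such that for every commutative ring `R`, every subgroup `H ≤ G` and
every Witt vector `x ∈ W_G(R)` one has
`−φ_H(x) = φ_H((m_U(x_V | U ⪯ V ≤ G))'_{U ≤ G})`. -/
theorem witt_negation_polynomials (G : Type u) [Group G] [Fintype G] :
    ∃ m : ∀ C : SubgroupConjClasses G,
      MvPolynomial
        {D : SubgroupConjClasses G // Subconj (Quotient.out C) (Quotient.out D)} ℤ,
      ∀ (R : Type u) [CommRing R] (H : Subgroup G) (x : SubgroupConjClasses G → R),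
        - ghost H x =
          ghost H (fun C => MvPolynomial.aeval (fun D => x D.1) (m C)) := by
  obtain ⟨y, hy, hghost⟩ := exists_ghost_eq_neg_ghost_X G
  have hrename : ∀ C, ∃ p : MvPolynomial
      {D : SubgroupConjClasses G // Subconj (Quotient.out C) (Quotient.out D)} ℤ,
      MvPolynomial.rename Subtype.val p = y C := fun C => by
    have hyC := hy C
    rw [MvPolynomial.supported_eq_range_rename] at hyC
    exact hyC
  choose m hm using hrename
  refine ⟨m, fun R _ H x => ?_⟩
  let f : MvPolynomial (SubgroupConjClasses G) ℤ →+* R := (MvPolynomial.aeval x).toRingHom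
  have hX : f ∘ MvPolynomial.X = x := funext (MvPolynomial.aeval_X x)
  have hfy : f ∘ y = fun C => MvPolynomial.aeval (fun D => x D.1) (m C) := funext fun C => by
    rw [Function.comp_apply, ← hm]
    exact MvPolynomial.aeval_rename _ _ _
  rw [← hfy, ← map_ghost, hghost, map_neg, map_ghost, hX]
end

section
/- Let G be a finite group, let V₁, …, V_k ≤ G be a sequence of subgroups, and let ε₁, …, ε_k ∈ {+1, −1}. Then there exists for every conjugacy class of subgroups U ≤ G a polynomial ξ_U ∈ ℤ[x₁, …, x_k] with integer coefficients such that for every commutative ring R, every subgroup H ≤ G, and all s₁, …, s_k ∈ R: Σ_{i=1}^{k} ε_i · |(G/V_i)^H| · s_i^{(V_i:H)} = Σ'_{U ≤ G} |(G/U)^H| · (ξ_U(s₁, …, s_k))^{(U:H)}, where the primed sum takes exactly one summand for each conjugacy class of subgroups U of G, the exponent (K:H) means |K|/|H|, and any summand whose fixed-point count |(G/K)^H| vanishes (which happens unless some conjugate of H is contained in K) is zero. -/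
open MulAction Pointwise
open scoped Classical

/-!
Since `|(G/V)^U|` vanishes unless `U` is subconjugate to `V`, the polynomials `ξ_U` can be found
recursively, from large subgroups to small ones, provided that at each `U` the defect of the
identity is divisible by the diagonal mark `|(G/U)^U| = |N(U)/U|`.

The divisibility comes from Burnside's lemma. A polynomial `f` is modulo `|G|` a sum of monomials
`m_j`, and twisting the family `K ↦ |(G/V)^K| f^{(V:K)}` by the Frobenius lifts `X ↦ X ^ |K|` turns
it into `K ↦ |(G/V)^K| (∑ m_j ^ |K|)^{(V:K)}`. This is the weighted number of `K`-fixed points of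
a single `G`-set, whose points are the cosets of `V` with a label `j` on each member, so that the
weighted Burnside lemma for the action of `N(U)` yields a congruence at each `U`. The twist does no
harm, as `X ↦ X ^ |K|` neither creates nor destroys divisibility by an integer.
-/

section Burnside

theorem card_dvd_sum_fixedBy {W Y A : Type*} [Group W] [Fintype W] [MulAction W Y] [Fintype Y]
    [CommSemiring A] (w : Y → A) (hw : ∀ (g : W) y, w (g • y) = w y) :
    (Nat.card W : A) ∣ ∑ g : W, ∑ y : fixedBy Y g, w y := by
  have : Fintype (orbitRel.Quotient W Y) := Fintype.ofFinite _
  let wbar : orbitRel.Quotient W Y → A := Quotient.lift w (by rintro _ y ⟨g, rfl⟩; exact hw g y)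
  have sum_eq : ∑ g : W, ∑ y : fixedBy Y g, w y = Nat.card W * ∑ ω, wbar ω := calc
    _ = ∑ p : Σ g : W, fixedBy Y g, w p.2 := (Fintype.sum_sigma' _).symm
    _ = ∑ p : orbitRel.Quotient W Y × W, wbar p.1 :=
      Fintype.sum_equiv (sigmaFixedByEquivOrbitsProdGroup W Y) _ _ fun _ => rfl
    _ = Nat.card W * ∑ ω, wbar ω := by
      simp only [Fintype.sum_prod_type, Finset.sum_const, Finset.card_univ,
        Nat.card_eq_fintype_card, nsmul_eq_mul, ← Finset.mul_sum]
  exact Dvd.intro _ sum_eq.symm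

variable {G A : Type*} [Group G]

theorem conjAct_smul_le_stabilizer_smul_iff {Y : Type*} [MulAction G Y] (g : ConjAct G)
    (K : Subgroup G) (y : Y) :
    g • K ≤ stabilizer G (ConjAct.ofConjAct g • y) ↔ K ≤ stabilizer G y := by
  rw [stabilizer_smul_eq_stabilizer_map_conj]
  exact Subgroup.pointwise_smul_le_pointwise_smul_iff

variable [Fintype G]

/-- The families `a` indexed by the subgroups of `G` which satisfy the Burnside congruences
`∑ n ∈ N(H), a(⟨n⟩H) ≡ 0 mod |N(H)|` for all `H`. Since `⟨n⟩H` depends only on the coset `nH`,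
this is `|H|` times the classical congruence modulo `|N(H)/H|`. -/
def burnsideCongruences (G A : Type*) [Group G] [Fintype G] [CommRing A] :
    Submodule A (Subgroup G → A) where
  carrier := {a | ∀ H : Subgroup G, (Nat.card (Subgroup.normalizer (H : Set G)) : A) ∣
    ∑ n : Subgroup.normalizer (H : Set G), a (Subgroup.zpowers (n : G) ⊔ H)}
  zero_mem' H := by simp
  add_mem' ha hb H := by
    simpa only [Pi.add_apply, Finset.sum_add_distrib] using dvd_add (ha H) (hb H)
  smul_mem' c a ha H := by
    simpa only [Pi.smul_apply, smul_eq_mul, ← Finset.mul_sum] using (ha H).mul_left c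

variable [CommRing A]

theorem sum_le_stabilizer_mem_burnsideCongruences {Y : Type*} [MulAction G Y] [Fintype Y]
    (w : Y → A) (hw : ∀ (g : G) y, w (g • y) = w y) :
    (fun K => ∑ y with K ≤ stabilizer G y, w y) ∈ burnsideCongruences G A := by
  intro H
  let N := Subgroup.normalizer (H : Set G)
  let wH : Y → A := fun y => if H ≤ stabilizer G y then w y else 0
  have wH_smul (n : N) (y : Y) : wH (n • y) = wH y := by
    have h := conjAct_smul_le_stabilizer_smul_iff (ConjAct.toConjAct (n : G)) H y
    rw [Subgroup.conjAct_pointwise_smul_eq_self n.2] at h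
    exact if_congr h (hw n y) rfl
  convert card_dvd_sum_fixedBy wH wH_smul using 2 with n
  calc
    _ = ∑ y with y ∈ fixedBy Y n, wH y := by
      rw [← Finset.sum_filter, Finset.filter_filter]
      refine Finset.sum_congr (Finset.filter_congr fun y _ => ?_) fun _ _ => rfl
      rw [sup_le_iff, Subgroup.zpowers_le]
      rfl
    _ = ∑ y : fixedBy Y n, wH y := Finset.sum_subtype _ (by simp) _

theorem mem_burnsideCongruences_of_dvd_sub {a b : Subgroup G → A}
    (hb : b ∈ burnsideCongruences G A) (hab : ∀ K, (Nat.card G : A) ∣ a K - b K) :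
    a ∈ burnsideCongruences G A := by
  intro H
  refine (dvd_iff_dvd_of_dvd_sub ?_).2 (hb H)
  rw [← Finset.sum_sub_distrib]
  refine Finset.dvd_sum fun n _ => dvd_trans ?_ (hab _)
  exact Nat.cast_dvd_cast (Subgroup.card_subgroup_dvd_card _)

end Burnside

section Labellings

variable {A : Type*} [CommSemiring A]

theorem sum_prod_of_factorsThrough {T Q B : Type*} [Fintype T] [Fintype Q]
    [DecidableEq Q] [Fintype B] {π : T → Q} (hπ : π.Surjective) (μ : T → B → A) :
    ∑ F : T → B with F.FactorsThrough π, ∏ t, μ t (F t) =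
      ∏ c, ∑ b, ∏ t with π t = c, μ t b := by
  rw [Finset.prod_univ_sum, Fintype.piFinset_univ]
  symm
  refine Finset.sum_nbij (· ∘ π) (fun F' _ => ?_) hπ.injective_comp_right.injOn
    (fun F hF => ?_) fun F' _ => ?_
  · exact Finset.mem_filter.2 ⟨Finset.mem_univ _, fun _ _ => congrArg F'⟩
  · refine ⟨F ∘ Function.surjInv hπ, Finset.mem_coe.2 (Finset.mem_univ _), funext fun t => ?_⟩
    exact (Finset.mem_filter.1 hF).2 (Function.surjInv_eq hπ (π t))
  · rw [← Finset.prod_fiberwise (s := Finset.univ) (g := π)]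
    refine Finset.prod_congr rfl fun c _ => Finset.prod_congr rfl fun t ht => ?_
    rw [Function.comp_apply, (Finset.mem_filter.1 ht).2]

/-- The weight of the label of one group element: labels `some j` have weight `m j` and must be
placed exactly where the condition `p` holds, all other placements having weight zero. -/
noncomputable def cellWeight {J : Type*} (m : J → A) (p : Prop) : Option J → A
  | none => if p then 0 else 1
  | some j => if p then m j else 0

theorem sum_cellWeight_pow {J : Type*} [Fintype J] (m : J → A) (p : Prop) [Decidable p]
    {n : ℕ} (hn : n ≠ 0) :
    ∑ o, cellWeight m p o ^ n = if p then ∑ j, m j ^ n else 1 := by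
  by_cases p <;> simp [*, cellWeight, Fintype.sum_option]

variable {G : Type*} [Group G]

/-- A coset of `V` together with a partial `J`-valued labelling of the elements of `G`. The group
acts on the coset by left and on the argument of the labelling by right multiplication, so that a
labelling is `K`-invariant when it is constant on left cosets of `K`. -/
@[ext]
structure CosetLabelling (V : Subgroup G) (J : Type*) where
  coset : G ⧸ V
  label : G → Option J

namespace CosetLabelling

variable {V : Subgroup G} {J : Type*}

instance : MulAction G (CosetLabelling V J) where
  smul g y := ⟨g • y.coset, fun a => y.label (a * g)⟩
  one_smul y := CosetLabelling.ext (one_smul G _) (funext fun a => congrArg y.label (mul_one a))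
  mul_smul g h y := CosetLabelling.ext (mul_smul g h _)
    (funext fun a => congrArg y.label (mul_assoc a g h).symm)

theorem le_stabilizer_iff {K : Subgroup G} {y : CosetLabelling V J} :
    K ≤ stabilizer G y ↔
      K ≤ stabilizer G y.coset ∧ y.label.FactorsThrough ((↑) : G → G ⧸ K) := by
  have mem_iff (g : G) :
      g ∈ stabilizer G y ↔ g ∈ stabilizer G y.coset ∧ ∀ a, y.label (a * g) = y.label a := by
    rw [mem_stabilizer_iff, mem_stabilizer_iff, ← funext_iff]
    exact CosetLabelling.ext_iff
  simp only [SetLike.le_def, mem_iff, forall_and]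
  refine and_congr_right fun _ => ⟨fun h a b hab => ?_, fun h g hg a => h ?_⟩
  · rw [← h _ (QuotientGroup.eq.1 hab) a, mul_inv_cancel_left]
  · exact QuotientGroup.mk_mul_of_mem a hg

def equivProd : CosetLabelling V J ≃ (G ⧸ V) × (G → Option J) where
  toFun y := (y.coset, y.label)
  invFun p := ⟨p.1, p.2⟩

variable [Fintype G]

noncomputable instance [Fintype J] : Fintype (CosetLabelling V J) :=
  Fintype.ofEquiv _ equivProd.symm

/-- The weight of a labelled coset `xV`: the product of the weights `m j` of all labels if exactly
the elements of `Vx⁻¹` are labelled, and zero otherwise. -/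
noncomputable def weight (m : J → A) (y : CosetLabelling V J) : A :=
  ∏ a : G, cellWeight m (a • y.coset = ((1 : G) : G ⧸ V)) (y.label a)

theorem weight_smul (m : J → A) (g : G) (y : CosetLabelling V J) :
    weight m (g • y) = weight m y := by
  refine Fintype.prod_equiv (Equiv.mulRight g) _ _ fun a => ?_
  rw [Equiv.coe_mulRight, mul_smul]
  rfl

end CosetLabelling

theorem card_smul_eq {V : Subgroup G} (x y : G ⧸ V) :
    Nat.card {a : G | a • x = y} = Nat.card V := by
  induction x using QuotientGroup.induction_on with | _ b =>
  induction y using QuotientGroup.induction_on with | _ c =>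
  have card_preimage := QuotientGroup.card_preimage_mk V {(c : G ⧸ V)}
  rw [Nat.card_unique (α := ({(c : G ⧸ V)} : Set (G ⧸ V))), mul_one] at card_preimage
  rw [← card_preimage]
  exact Nat.card_congr ((Equiv.mulRight b).subtypeEquiv fun a => Iff.rfl)

theorem out_smul_of_le_stabilizer {X : Type*} [MulAction G X] {K : Subgroup G} {x : X}
    (hK : K ≤ stabilizer G x) (a : G) : (a : G ⧸ K).out • x = a • x := by
  obtain ⟨h, hh⟩ := QuotientGroup.mk_out_eq_mul K a
  rw [hh, mul_smul, hK h.2]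

variable [Fintype G]

theorem card_filter_mk_eq (K : Subgroup G) (c : G ⧸ K) :
    Finset.card {a : G | (a : G ⧸ K) = c} = Nat.card K := by
  have card_preimage := QuotientGroup.card_preimage_mk K {c}
  simpa [Set.preimage, Fintype.card_subtype] using card_preimage

theorem sum_prod_cellWeight {J : Type*} [Fintype J] (K : Subgroup G) (m : J → A)
    (p : G ⧸ K → Prop) [DecidablePred p] :
    ∑ F : G → Option J with F.FactorsThrough ((↑) : G → G ⧸ K),
        ∏ a : G, cellWeight m (p a) (F a) =
      (∑ j, m j ^ Nat.card K) ^ Finset.card {c | p c} := by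
  calc
    _ = ∏ c : G ⧸ K, ∑ o, ∏ a : G with QuotientGroup.mk a = c, cellWeight m (p a) o :=
      sum_prod_of_factorsThrough QuotientGroup.mk_surjective fun a : G => cellWeight m (p a)
    _ = ∏ c : G ⧸ K, ∑ o, cellWeight m (p c) o ^ Nat.card K := by
      refine Finset.prod_congr rfl fun c _ => Finset.sum_congr rfl fun o _ => ?_
      rw [← card_filter_mk_eq K c]
      exact Finset.prod_eq_pow_card fun a ha => by rw [(Finset.mem_filter.1 ha).2]
    _ = ∏ c : G ⧸ K, if p c then ∑ j, m j ^ Nat.card K else 1 :=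
      Finset.prod_congr rfl fun c _ => sum_cellWeight_pow m (p c) Nat.card_pos.ne'
    _ = _ := by
      rw [← Finset.prod_filter, Finset.prod_const]

theorem card_out_smul_eq {K V : Subgroup G} {x : G ⧸ V} (hK : K ≤ stabilizer G x)
    (y : G ⧸ V) :
    Finset.card {c : G ⧸ K | c.out • x = y} = Nat.card V / Nat.card K := by
  have card_mul := QuotientGroup.card_preimage_mk K {c : G ⧸ K | c.out • x = y}
  simp only [Set.preimage_ofPred_eq, out_smul_of_le_stabilizer hK, card_smul_eq] at card_mul
  rw [card_mul, Nat.mul_div_cancel_left _ Nat.card_pos, Nat.card_eq_fintype_card]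
  exact (Fintype.card_subtype _).symm

namespace CosetLabelling

variable {K V : Subgroup G} {J : Type*} [Fintype J]

theorem sum_weight_mk_of_le_stabilizer (x : G ⧸ V) (hK : K ≤ stabilizer G x) (m : J → A) :
    ∑ F : G → Option J with F.FactorsThrough ((↑) : G → G ⧸ K), weight m ⟨x, F⟩ =
      (∑ j, m j ^ Nat.card K) ^ (Nat.card V / Nat.card K) := by
  have h := sum_prod_cellWeight K m fun c => c.out • x = ((1 : G) : G ⧸ V)
  rw [card_out_smul_eq hK] at h
  simpa only [weight, out_smul_of_le_stabilizer hK] using h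

theorem sum_weight_of_le_stabilizer (K V : Subgroup G) (m : J → A) :
    ∑ y : CosetLabelling V J with K ≤ stabilizer G y, weight m y =
      Finset.card {x : G ⧸ V | K ≤ stabilizer G x} *
        (∑ j, m j ^ Nat.card K) ^ (Nat.card V / Nat.card K) := by
  calc
    _ = ∑ x : G ⧸ V with K ≤ stabilizer G x,
          ∑ F : G → Option J with F.FactorsThrough ((↑) : G → G ⧸ K), weight m ⟨x, F⟩ := by
      rw [← Finset.sum_product']
      refine Finset.sum_equiv equivProd (fun y => ?_) fun _ _ => rfl
      simp only [Finset.mem_filter, Finset.mem_univ, true_and, Finset.mem_product,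
        le_stabilizer_iff]
      rfl
    _ = _ := by
      rw [← nsmul_eq_mul]
      exact Finset.sum_eq_card_nsmul fun x hx =>
        sum_weight_mk_of_le_stabilizer x (Finset.mem_filter.1 hx).2 m

end CosetLabelling

end Labellings

section Marks

variable {G : Type*} [Group G]

/-- The number of fixed points of `K` on `G/V`, an entry of the table of marks of `G`. -/
noncomputable def mark (K V : Subgroup G) : ℕ :=
  Nat.card (fixedPoints K (G ⧸ V))

theorem mem_fixedPoints_iff_le_stabilizer_s8 {K V : Subgroup G} {x : G ⧸ V} :
    x ∈ fixedPoints K (G ⧸ V) ↔ K ≤ stabilizer G x :=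
  ⟨fun h k hk => h ⟨k, hk⟩, fun h k => h k.2⟩

theorem mark_eq_card_le_stabilizer [Fintype G] (K V : Subgroup G) :
    mark K V = Finset.card {x : G ⧸ V | K ≤ stabilizer G x} := by
  rw [mark, Nat.card_eq_fintype_card, Fintype.card_subtype]
  simp only [mem_fixedPoints_iff_le_stabilizer_s8]

theorem mark_conjAct_smul (g : ConjAct G) (K V : Subgroup G) : mark (g • K) V = mark K V := by
  refine (Nat.card_congr ((MulAction.toPerm (ConjAct.ofConjAct g)).subtypeEquiv fun x => ?_)).symm
  simp only [mem_fixedPoints_iff_le_stabilizer_s8, MulAction.toPerm_apply,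
    conjAct_smul_le_stabilizer_smul_iff]

theorem subconj_of_mark_ne_zero {K V : Subgroup G} (h : mark K V ≠ 0) : Subconj K V := by
  obtain ⟨⟨x, hx⟩⟩ := (Nat.card_ne_zero.1 h).1
  induction x using QuotientGroup.induction_on with | _ g =>
  refine ⟨ConjAct.toConjAct g, ?_⟩
  have stab : stabilizer G (g : G ⧸ V) = ConjAct.toConjAct g • V := by
    rw [← mul_one g, ← smul_eq_mul, ← MulAction.Quotient.smul_coe,
      stabilizer_smul_eq_stabilizer_map_conj, stabilizer_quotient, smul_eq_mul, mul_one]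
    rfl
  rw [← stab]
  exact mem_fixedPoints_iff_le_stabilizer_s8.1 hx

theorem card_conjAct_smul (g : ConjAct G) (V : Subgroup G) :
    Nat.card (g • V : Subgroup G) = Nat.card V :=
  (Nat.card_congr (Subgroup.equivSMul g V).toEquiv).symm

/-- The conjugacy class of a subgroup. -/
def conjClass (K : Subgroup G) : SubgroupConjClasses G :=
  Quotient.mk'' K

theorem exists_conjAct_smul_eq_out (K : Subgroup G) :
    ∃ g : ConjAct G, g • K = (conjClass K).out :=
  Quotient.mk_out (s := orbitRel (ConjAct G) (Subgroup G)) K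

theorem card_out_conjClass (K : Subgroup G) : Nat.card (conjClass K).out = Nat.card K := by
  obtain ⟨g, hg⟩ := exists_conjAct_smul_eq_out K
  rw [← hg, card_conjAct_smul]

theorem mark_self_mul_card (K : Subgroup G) [Finite K] :
    mark K K * Nat.card K = Nat.card (Subgroup.normalizer (K : Set G)) := by
  rw [mark, Nat.card_congr (Sylow.fixedPointsMulLeftCosetsEquivQuotient K),
    ← Nat.card_congr (Subgroup.subgroupOfEquivOfLe (Subgroup.le_normalizer (H := K))).toEquiv]
  exact (Subgroup.card_eq_card_quotient_mul_card_subgroup _).symm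

theorem mark_out_out_eq_zero [Finite G] {C D : SubgroupConjClasses G} (hne : C ≠ D)
    (hcard : Nat.card D.out ≤ Nat.card C.out) : mark C.out D.out = 0 := by
  by_contra h
  obtain ⟨g, hg⟩ := subconj_of_mark_ne_zero h
  have heq : C.out = g • D.out :=
    Subgroup.eq_of_le_of_card_ge hg ((card_conjAct_smul g _).trans_le hcard)
  exact hne (Quotient.out_equiv_out.1 ⟨g, heq.symm⟩)

end Marks

section Polynomials

variable {σ : Type*}

theorem C_dvd_expand_iff {R : Type*} [CommSemiring R] {p : ℕ} (hp : p ≠ 0) {r : R}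
    {f : MvPolynomial σ R} :
    MvPolynomial.C r ∣ MvPolynomial.expand p f ↔ MvPolynomial.C r ∣ f := by
  refine ⟨fun h => ?_, fun h => ?_⟩
  · rw [MvPolynomial.C_dvd_iff_dvd_coeff] at h ⊢
    exact fun u => MvPolynomial.coeff_expand_smul p hp f u ▸ h (p • u)
  · simpa only [MvPolynomial.expand_C] using map_dvd (MvPolynomial.expand p) h

theorem exists_natCast_dvd_sub_sum_monomial {n : ℕ} (hn : n ≠ 0) (f : MvPolynomial σ ℤ) :
    ∃ (t : ℕ) (u : Fin t → σ →₀ ℕ),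
      (n : MvPolynomial σ ℤ) ∣ f - ∑ j, MvPolynomial.monomial (u j) 1 := by
  induction f using MvPolynomial.induction_on' with
  | monomial v a =>
    refine ⟨(a % n).toNat, fun _ => v, MvPolynomial.monomial v (a / n), ?_⟩
    have hmod : ((a % n).toNat : ℤ) = a % n :=
      Int.toNat_of_nonneg (Int.emod_nonneg _ (Int.natCast_ne_zero.2 hn))
    rw [Finset.sum_const, Finset.card_univ, Fintype.card_fin, ← map_nsmul, ← map_sub,
      ← nsmul_eq_mul, ← map_nsmul]
    congr 1
    rw [nsmul_one, hmod, nsmul_eq_mul]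
    linarith [Int.emod_add_mul_ediv a n]
  | add f g hf hg =>
    obtain ⟨s, u, hu⟩ := hf
    obtain ⟨t, v, hv⟩ := hg
    refine ⟨s + t, Fin.append u v, ?_⟩
    simpa only [Fin.sum_univ_add, Fin.append_left, Fin.append_right, add_sub_add_comm]
      using dvd_add hu hv

end Polynomials

section Ghost

variable {G : Type*} [Group G]

/-- The summand `|(G/V)^K| f^{(V:K)}` of a ghost component. The truncation in `|V| / |K|` is
harmless because the mark vanishes unless `|K|` divides `|V|`. -/
noncomputable def ghostTerm {A : Type*} [CommSemiring A] (K V : Subgroup G) (f : A) : A :=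
  mark K V * f ^ (Nat.card V / Nat.card K)

theorem ghostTerm_self {A : Type*} [CommSemiring A] (K : Subgroup G) [Finite K] (f : A) :
    ghostTerm K K f = mark K K * f := by
  rw [ghostTerm, Nat.div_self Nat.card_pos, pow_one]

theorem ghostTerm_conjAct_smul {A : Type*} [CommSemiring A] (g : ConjAct G) (K V : Subgroup G)
    (f : A) : ghostTerm (g • K) V f = ghostTerm K V f := by
  rw [ghostTerm, mark_conjAct_smul, card_conjAct_smul, ghostTerm]

variable [Fintype G]

theorem mark_mul_sum_pow_mem_burnsideCongruences {A J : Type*} [CommRing A] [Fintype J]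
    (V : Subgroup G) (m : J → A) :
    (fun K => mark K V * (∑ j, m j ^ Nat.card K) ^ (Nat.card V / Nat.card K)) ∈
      burnsideCongruences G A := by
  simpa only [CosetLabelling.sum_weight_of_le_stabilizer, ← mark_eq_card_le_stabilizer] using
    sum_le_stabilizer_mem_burnsideCongruences (CosetLabelling.weight (V := V) m)
      (CosetLabelling.weight_smul m)

variable {σ : Type*}

/-- The families of polynomials which satisfy the Burnside congruences after twisting the member
at `K` by the `|K|`-th Frobenius lift `X ↦ X ^ |K|`. -/
noncomputable def dworkCongruences (G σ : Type*) [Group G] [Fintype G] :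
    Submodule ℤ (Subgroup G → MvPolynomial σ ℤ) :=
  ((burnsideCongruences G (MvPolynomial σ ℤ)).restrictScalars ℤ).comap <|
    LinearMap.pi fun K : Subgroup G =>
      (MvPolynomial.expand (Nat.card K)).toLinearMap ∘ₗ LinearMap.proj K

theorem ghostTerm_mem_dworkCongruences (V : Subgroup G) (f : MvPolynomial σ ℤ) :
    (fun K => ghostTerm K V f) ∈ dworkCongruences G σ := by
  obtain ⟨t, u, hu⟩ := exists_natCast_dvd_sub_sum_monomial (Nat.card_pos (α := G)).ne' f
  refine mem_burnsideCongruences_of_dvd_sub (mark_mul_sum_pow_mem_burnsideCongruences V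
    fun j => MvPolynomial.monomial (u j) (1 : ℤ)) fun K => ?_
  have base : (Nat.card G : MvPolynomial σ ℤ) ∣ MvPolynomial.expand (Nat.card K) f -
      ∑ j, MvPolynomial.monomial (u j) 1 ^ Nat.card K := by
    simpa only [map_sub, map_sum, map_natCast, MvPolynomial.expand_monomial,
      MvPolynomial.monomial_pow, one_pow] using map_dvd (MvPolynomial.expand (Nat.card K)) hu
  change _ ∣ MvPolynomial.expand _ (ghostTerm K V f) - _
  rw [ghostTerm, map_mul, map_natCast, map_pow, ← mul_sub]
  exact (base.trans (sub_dvd_pow_sub_pow _ _ _)).mul_left _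

theorem mark_self_dvd_of_eq_zero_of_lt {A : Type*} [CommRing A] [IsDomain A] [CharZero A]
    {a : Subgroup G → A} (ha : a ∈ burnsideCongruences G A) {H : Subgroup G}
    (h0 : ∀ K, H < K → a K = 0) : (mark H H : A) ∣ a H := by
  have term (n : Subgroup.normalizer (H : Set G)) :
      a (Subgroup.zpowers (n : G) ⊔ H) = if (n : G) ∈ H then a H else 0 := by
    split_ifs with hn
    · rw [sup_eq_right.2 (Subgroup.zpowers_le.2 hn)]
    · exact h0 _ (right_lt_sup.2 (by rwa [Subgroup.zpowers_le]))
  have card_eq : Finset.card {n : Subgroup.normalizer (H : Set G) | (n : G) ∈ H} = Nat.card H := by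
    rw [← Nat.card_congr (Subgroup.subgroupOfEquivOfLe (Subgroup.le_normalizer (H := H))).toEquiv,
      Nat.card_eq_fintype_card]
    exact (Fintype.card_subtype _).symm
  have dvd : (mark H H : A) * Nat.card H ∣ a H * Nat.card H := by
    simpa only [term, ← Finset.sum_filter, Finset.sum_const, card_eq, nsmul_eq_mul,
      ← mark_self_mul_card, Nat.cast_mul, mul_comm (Nat.card H : A) (a H)] using ha H
  exact (mul_dvd_mul_iff_right (Nat.cast_ne_zero.2 Nat.card_pos.ne')).1 dvd

theorem mark_self_dvd_of_mem_dworkCongruences {a : Subgroup G → MvPolynomial σ ℤ}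
    (ha : a ∈ dworkCongruences G σ) {H : Subgroup G} (h0 : ∀ K, H < K → a K = 0) :
    (mark H H : MvPolynomial σ ℤ) ∣ a H := by
  have dvd_expand : (mark H H : MvPolynomial σ ℤ) ∣ MvPolynomial.expand (Nat.card H) (a H) :=
    mark_self_dvd_of_eq_zero_of_lt ha fun K hK =>
      (congrArg (MvPolynomial.expand (Nat.card K)) (h0 K hK)).trans (map_zero _)
  rwa [← map_natCast MvPolynomial.C, C_dvd_expand_iff Nat.card_pos.ne'] at dvd_expand

theorem ghost_eq_sum_ghostTerm {A : Type*} [CommRing A] (K : Subgroup G)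
    (ξ : SubgroupConjClasses G → A) : ghost K ξ = ∑ C, ghostTerm K C.out (ξ C) := by
  rw [ghost, finsum_eq_sum_of_fintype]
  refine Finset.sum_congr rfl fun C _ => ?_
  split_ifs with h
  · rfl
  · rw [ghostTerm, not_imp_comm.1 subconj_of_mark_ne_zero h, Nat.cast_zero, zero_mul]

theorem ghost_conjAct_smul {A : Type*} [CommRing A] (g : ConjAct G) (K : Subgroup G)
    (ξ : SubgroupConjClasses G → A) : ghost (g • K) ξ = ghost K ξ := by
  simp only [ghost_eq_sum_ghostTerm, ghostTerm_conjAct_smul]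

theorem ghost_update_sub {A : Type*} [CommRing A] (K : Subgroup G)
    (ξ : SubgroupConjClasses G → A) (C : SubgroupConjClasses G) (x : A) :
    ghost K (Function.update ξ C x) - ghost K ξ =
      ghostTerm K C.out x - ghostTerm K C.out (ξ C) := by
  rw [ghost_eq_sum_ghostTerm, ghost_eq_sum_ghostTerm, ← Finset.sum_sub_distrib,
    Finset.sum_eq_single_of_mem C (Finset.mem_univ C), Function.update_self]
  intro D _ hD
  rw [Function.update_of_ne hD, sub_self]

theorem ghost_out_update {A : Type*} [CommRing A] (ξ : SubgroupConjClasses G → A)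
    {C D : SubgroupConjClasses G} (x : A) (hne : D ≠ C)
    (hcard : Nat.card C.out ≤ Nat.card D.out) :
    ghost D.out (Function.update ξ C x) = ghost D.out ξ := by
  rw [← sub_eq_zero, ghost_update_sub, ghostTerm, ghostTerm, mark_out_out_eq_zero hne hcard,
    Nat.cast_zero, zero_mul, zero_mul, sub_zero]

theorem ghost_mem_dworkCongruences (ξ : SubgroupConjClasses G → MvPolynomial σ ℤ) :
    (fun K => ghost K ξ) ∈ dworkCongruences G σ := by
  simp only [ghost_eq_sum_ghostTerm, ← Finset.sum_fn]
  exact Submodule.sum_mem _ fun C _ => ghostTerm_mem_dworkCongruences C.out (ξ C)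

theorem exists_ghost_update_eq {a : Subgroup G → MvPolynomial σ ℤ}
    (ha : a ∈ dworkCongruences G σ) {ξ : SubgroupConjClasses G → MvPolynomial σ ℤ}
    {C : SubgroupConjClasses G} (hξ : ∀ K, C.out < K → a K = ghost K ξ) :
    ∃ x, a C.out = ghost C.out (Function.update ξ C x) := by
  obtain ⟨q, hq⟩ := mark_self_dvd_of_mem_dworkCongruences
    (Submodule.sub_mem _ ha (ghost_mem_dworkCongruences ξ)) fun K hK => sub_eq_zero.2 (hξ K hK)
  refine ⟨ξ C + q, ?_⟩
  have update_sub := ghost_update_sub C.out ξ C (ξ C + q)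
  rw [ghostTerm_self, ghostTerm_self, mul_add, add_sub_cancel_left, ← hq] at update_sub
  exact (sub_left_inj.1 update_sub).symm

theorem exists_ghost_eq {a : Subgroup G → MvPolynomial σ ℤ}
    (ha : a ∈ dworkCongruences G σ) (a_smul : ∀ (g : ConjAct G) K, a (g • K) = a K) :
    ∃ ξ : SubgroupConjClasses G → MvPolynomial σ ℤ, ∀ K, a K = ghost K ξ := by
  have eq_of_out (ξ : SubgroupConjClasses G → MvPolynomial σ ℤ) (K : Subgroup G)
      (h : a (conjClass K).out = ghost (conjClass K).out ξ) : a K = ghost K ξ := by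
    obtain ⟨g, hg⟩ := exists_conjAct_smul_eq_out K
    rwa [← hg, a_smul, ghost_conjAct_smul] at h
  suffices ∀ S : Finset (SubgroupConjClasses G),
      (∀ C ∈ S, ∀ K : Subgroup G, Nat.card C.out < Nat.card K → conjClass K ∈ S) →
        ∃ ξ : SubgroupConjClasses G → MvPolynomial σ ℤ, ∀ C ∈ S, a C.out = ghost C.out ξ by
    obtain ⟨ξ, hξ⟩ := this Finset.univ fun _ _ _ _ => Finset.mem_univ _
    exact ⟨ξ, fun K => eq_of_out ξ K (hξ _ (Finset.mem_univ _))⟩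
  intro S
  induction S using Finset.induction_on_min_value
    (fun C : SubgroupConjClasses G => Nat.card C.out) with
  | empty => exact fun _ => ⟨0, by simp only [Finset.notMem_empty, false_imp_iff, implies_true]⟩
  | insert C S hC hmin ih =>
    intro upper
    have upper_of_le (D) (hD : D ∈ insert C S) (hCD : Nat.card C.out ≤ Nat.card D.out)
        (K : Subgroup G) (hK : Nat.card D.out < Nat.card K) : conjClass K ∈ S := by
      refine (Finset.mem_insert.1 (upper D hD K hK)).resolve_left fun h => ?_
      exact (hCD.trans_lt hK).ne (by rw [← h, card_out_conjClass])
    obtain ⟨ξ, hξ⟩ := ih fun D hD => upper_of_le D (Finset.mem_insert_of_mem hD) (hmin D hD)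
    obtain ⟨x, hx⟩ := exists_ghost_update_eq ha fun K (hK : C.out < K) =>
      eq_of_out ξ K <| hξ _ <| upper_of_le C (Finset.mem_insert_self C S) le_rfl K <|
        Set.Finite.card_lt_card (Set.toFinite _) hK
    refine ⟨Function.update ξ C x, fun D hD => ?_⟩
    obtain rfl | hD := Finset.mem_insert.1 hD
    · exact hx
    · rw [ghost_out_update ξ x (ne_of_mem_of_not_mem hD hC) (hmin D hD), hξ D hD]

end Ghost

theorem xi_polynomials_exist_general {G : Type*} [Group G] [Finite G] {ι : Type*} [Fintype ι]
    (V : ι → Subgroup G) (ε : ι → ℤ) :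
    ∃ ξ : SubgroupConjClasses G → MvPolynomial ι ℤ,
      ∀ (R : Type*) [CommRing R] (H : Subgroup G) (s : ι → R),
        ∑ i, (ε i : R) * (Nat.card (MulAction.fixedPoints H (G ⧸ V i)) : R) *
            s i ^ (Nat.card (V i) / Nat.card H) =
        ∑ᶠ C : SubgroupConjClasses G,
          (Nat.card (MulAction.fixedPoints H
              (G ⧸ (Quotient.out C : Subgroup G))) : R) *
            (MvPolynomial.aeval s (ξ C)) ^
              (Nat.card (Quotient.out C : Subgroup G) / Nat.card H) := by
  have : Fintype G := Fintype.ofFinite G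
  let a (K : Subgroup G) : MvPolynomial ι ℤ := ∑ i, ε i • ghostTerm K (V i) (MvPolynomial.X i)
  have a_smul (g : ConjAct G) (K : Subgroup G) : a (g • K) = a K := by
    simp only [a, ghostTerm_conjAct_smul]
  have a_mem : a ∈ dworkCongruences G ι := by
    have a_eq : a = ∑ i, ε i • fun K => ghostTerm K (V i) (MvPolynomial.X i) :=
      (Finset.sum_fn _ _).symm
    rw [a_eq]
    exact Submodule.sum_mem _ fun i _ =>
      Submodule.smul_mem _ _ (ghostTerm_mem_dworkCongruences (V i) (MvPolynomial.X i))
  obtain ⟨ξ, hξ⟩ := exists_ghost_eq a_mem a_smul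
  refine ⟨ξ, fun R _ H s => ?_⟩
  rw [finsum_eq_sum_of_fintype]
  simpa only [a, ghost_eq_sum_ghostTerm, ghostTerm, mark, map_sum, map_mul, map_pow, map_intCast,
    map_natCast, zsmul_eq_mul, MvPolynomial.aeval_X, mul_assoc] using
    congrArg (MvPolynomial.aeval s) (hξ H)

/-- For every sequence `V₁, …, V_k` of subgroups of a finite group `G` and signs
`ε₁, …, ε_k ∈ {±1}` there exists, for every conjugacy class of subgroups `U ≤ G`, an
integral polynomial `ξ_U ∈ ℤ[x₁, …, x_k]` such that for every commutative ring `R`,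
every subgroup `H ≤ G` and all `s₁, …, s_k ∈ R`:
`Σ_{i=1}^k ε_i |(G/V_i)^H| s_i^{(V_i:H)} = Σ'_{U ≤ G} |(G/U)^H| (ξ_U(s₁,…,s_k))^{(U:H)}`,
the primed sum having exactly one summand for each conjugacy class of subgroups of `G`. -/
theorem xi_polynomials_exist (G : Type u) [Group G] [Fintype G]
    (k : ℕ) (V : Fin k → Subgroup G) (ε : Fin k → ℤ) (hε : ∀ i, ε i = 1 ∨ ε i = -1) :
    ∃ ξ : SubgroupConjClasses G → MvPolynomial (Fin k) ℤ,
      ∀ (R : Type u) [CommRing R] (H : Subgroup G) (s : Fin k → R),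
        ∑ i, (ε i : R) * (Nat.card (MulAction.fixedPoints H (G ⧸ V i)) : R) *
            s i ^ (Nat.card (V i) / Nat.card H) =
        ∑ᶠ C : SubgroupConjClasses G,
          (Nat.card (MulAction.fixedPoints H
              (G ⧸ (Quotient.out C : Subgroup G))) : R) *
            (MvPolynomial.aeval s (ξ C)) ^
              (Nat.card (Quotient.out C : Subgroup G) / Nat.card H) := by
  exact xi_polynomials_exist_general V ε
end
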